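/- The first Dirichlet biharmonic eigenvalue of the unit square satisfies 1294.933940 ≤ λ₁(1) ≤ 1294.933988. -/

import Mathlib

/-!
Both bounds come from one trial polynomial `u = q d²`, where `d` vanishes on the boundary of the
square. Composing `d` with a smooth cutoff makes `u` a limit of test functions, so its Rayleigh
quotient bounds `λ₁` from above.

For the lower bound, a clamped function takes equal values at the two ends of every horizontal or
vertical chord, so Wirtinger's inequality for periodic functions applies on each chord; averaging
gives a Poincaré inequality with constant `(2π)²`, hence `‖Δw‖² ≥ (2π)⁴ ‖w‖² > 1558 ‖w‖²`, for
clamped `w` of mean zero. Thus at most one eigenvalue lies below `1558`. With a polynomial `s`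
solving `Δs = u`, chosen close to `Δu / λ₁`, Lehmann's method turns this crude gap into a sharp
lower bound for `λ₁`, which depends only on the rational numbers `∫ s²`, `∫ u²` and `∫ (Δu)²`.
-/

open MeasureTheory Real Filter

noncomputable section

/-- Directional (partial) derivative of `u : ℝ × ℝ → ℝ` in direction `v`. -/
def pd (v : ℝ × ℝ) (u : ℝ × ℝ → ℝ) : ℝ × ℝ → ℝ := fun p => fderiv ℝ u p v

/-- Second partial derivative `∂²u/∂x²`. -/
def uxx (u : ℝ × ℝ → ℝ) : ℝ × ℝ → ℝ := pd (1, 0) (pd (1, 0) u)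

/-- Second partial derivative `∂²u/∂y²`. -/
def uyy (u : ℝ × ℝ → ℝ) : ℝ × ℝ → ℝ := pd (0, 1) (pd (0, 1) u)

/-- Mixed second partial derivative `∂²u/∂x∂y`. -/
def uxy (u : ℝ × ℝ → ℝ) : ℝ × ℝ → ℝ := pd (0, 1) (pd (1, 0) u)

/-- The Laplacian `Δu = u_xx + u_yy`. -/
def lap (u : ℝ × ℝ → ℝ) : ℝ × ℝ → ℝ := fun p => uxx u p + uyy u p

/-- The open rectangle `R_a = (0,a) × (0,1/a)` of unit area. -/
def Rect (a : ℝ) : Set (ℝ × ℝ) := Set.Ioo 0 a ×ˢ Set.Ioo 0 (1 / a)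

/-- Admissible test functions: smooth, compactly supported inside `Ω`. -/
def Adm (Ω : Set (ℝ × ℝ)) (u : ℝ × ℝ → ℝ) : Prop :=
  ContDiff ℝ (⊤ : ℕ∞) u ∧ HasCompactSupport u ∧ tsupport u ⊆ Ω

/-- First Dirichlet eigenvalue of the biharmonic operator on `R_a`,
characterized variationally as the infimum of the Rayleigh quotient. -/
def lam1 (a : ℝ) : ℝ :=
  sInf { μ | ∃ u : ℝ × ℝ → ℝ, Adm (Rect a) u ∧ u ≠ 0 ∧
    μ = (∫ p, (lap u p) ^ 2) / (∫ p, (u p) ^ 2) }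

section Lehmann

open RealInnerProductSpace

variable {H : Type*} [NormedAddCommGroup H] [InnerProductSpace ℝ H] {μ ρ : ℝ}

theorem mul_norm_sq_add_le_norm_sq_add {w w' u u' s : H} (hμ : 0 < μ) (hμρ : μ < ρ)
    (hw : ρ * ‖w‖ ^ 2 ≤ ‖w'‖ ^ 2) (hws : ⟪w', s⟫ = ⟪w, u⟫) (hus : ⟪u', s⟫ = ‖u‖ ^ 2)
    (hlower : μ * (ρ * ‖s‖ ^ 2 - ‖u‖ ^ 2) ≤ ρ * ‖u‖ ^ 2 - ‖u'‖ ^ 2) :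
    μ * ‖w + u‖ ^ 2 ≤ ‖w' + u'‖ ^ 2 := by
  have hsq : 0 ≤ ‖(ρ - μ) • w' + ρ • (u' - μ • s)‖ ^ 2 := by positivity
  simp only [norm_add_sq_real, norm_sub_sq_real, norm_smul, mul_pow, inner_smul_left,
    inner_smul_right, inner_sub_right, hws, hus, norm_eq_abs, sq_abs, conj_trivial] at hsq ⊢
  have hρ : 0 < ρ := hμ.trans hμρ
  have hρμ : 0 < ρ - μ := sub_pos.2 hμρ
  refine le_of_mul_le_mul_left ?_ (mul_pos hρ hρμ)
  linear_combination hsq + (ρ - μ) * μ * hw + ρ * μ * hlower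

/-- The ideal `s` is `A (A* A)⁻¹ J* J u`, which need not be known exactly nor lie in the range of
`A`. The gap on the complement of the single vector `e` replaces a bound for the second
eigenvalue. -/
theorem lehmann_bound {V : Type*} [AddCommGroup V] [Module ℝ V] (J A : V →ₗ[ℝ] H) (e : H)
    (hμ : 0 < μ) (hμρ : μ < ρ) (hgap : ∀ w, ⟪e, J w⟫ = 0 → ρ * ‖J w‖ ^ 2 ≤ ‖A w‖ ^ 2)
    {u : V} {s : H} (hs : ∀ v, ⟪A v, s⟫ = ⟪J v, J u⟫) (hupper : ‖A u‖ ^ 2 < ρ * ‖J u‖ ^ 2)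
    (hlower : μ * (ρ * ‖s‖ ^ 2 - ‖J u‖ ^ 2) ≤ ρ * ‖J u‖ ^ 2 - ‖A u‖ ^ 2) (v : V) :
    μ * ‖J v‖ ^ 2 ≤ ‖A v‖ ^ 2 := by
  have hu : ⟪e, J u⟫ ≠ 0 := fun h => (hgap u h).not_gt hupper
  set a := ⟪e, J v⟫ / ⟪e, J u⟫ with ha
  have hw : ⟪e, J (v - a • u)⟫ = 0 := by
    rw [map_sub, map_smul, inner_sub_right, inner_smul_right, ha, div_mul_cancel₀ _ hu, sub_self]
  have key := mul_norm_sq_add_le_norm_sq_add (u := J (a • u)) (u' := A (a • u)) (s := a • s)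
    hμ hμρ (hgap _ hw) (by rw [inner_smul_right, hs, map_smul J a u, inner_smul_right])
    (by
      simp only [map_smul, inner_smul_right, inner_smul_left, conj_trivial, hs,
        real_inner_self_eq_norm_sq, norm_smul, norm_eq_abs, mul_pow, sq_abs]
      ring) ?_
  · simpa using key
  · simp only [map_smul, norm_smul, mul_pow, norm_eq_abs, sq_abs]
    linear_combination a ^ 2 * hlower

end Lehmann

section Wirtinger

variable {a b : ℝ}

theorem hasSum_norm_sq_fourierCoeffOn_ofReal {f : ℝ → ℝ} (hf : Continuous f) (hab : a < b) :
    HasSum (fun n : ℤ => ‖fourierCoeffOn hab (fun x => (f x : ℂ)) n‖ ^ 2)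
      ((b - a)⁻¹ * ∫ x in a..b, f x ^ 2) := by
  have hL : MemLp (fun x => (f x : ℂ)) 2 (volume.restrict (Set.Ioc a b)) :=
    (memLp_two_iff_integrable_sq_norm (by fun_prop)).2
      ((by fun_prop : Continuous fun x => ‖(f x : ℂ)‖ ^ 2).integrableOn_Ioc)
  simpa using hasSum_sq_fourierCoeffOn hab hL

theorem norm_sq_fourierCoeffOn_zero_ofReal (f : ℝ → ℝ) (hab : a < b) :
    ‖fourierCoeffOn hab (fun x => (f x : ℂ)) 0‖ ^ 2 = ((b - a)⁻¹ * ∫ x in a..b, f x) ^ 2 := by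
  rw [fourierCoeffOn_eq_integral]
  simp [intervalIntegral.integral_ofReal, mul_pow, norm_smul, -Complex.real_smul]

theorem norm_sq_fourierCoeffOn_of_hasDerivAt {f f' : ℝ → ℝ} (hf : ∀ x, HasDerivAt f (f' x) x)
    (hf' : Continuous f') (hab : a < b) (hfab : f a = f b) {n : ℤ} (hn : n ≠ 0) :
    ‖fourierCoeffOn hab (fun x => (f' x : ℂ)) n‖ ^ 2 =
      (2 * π / (b - a)) ^ 2 * n ^ 2 * ‖fourierCoeffOn hab (fun x => (f x : ℂ)) n‖ ^ 2 := by
  have h := fourierCoeffOn_of_hasDerivAt hab hn (fun x _ => (hf x).ofReal_comp)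
    ((by fun_prop : Continuous fun x => (f' x : ℂ)).intervalIntegrable a b)
  have hn' : (n : ℝ) ≠ 0 := Int.cast_ne_zero.2 hn
  have hba : b - a ≠ 0 := (sub_pos.2 hab).ne'
  rw [h, hfab, sub_self, mul_zero, zero_sub]
  have : ‖(b : ℂ) - a‖ ^ 2 = (b - a) ^ 2 := by
    rw [← Complex.ofReal_sub, Complex.norm_real, norm_eq_abs, sq_abs]
  simp only [norm_mul, norm_neg, norm_div, norm_one, mul_pow, div_pow, this]
  simp only [one_pow, Complex.norm_ofNat, Complex.norm_real, norm_eq_abs, sq_abs, Complex.norm_I,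
    mul_one, Complex.norm_intCast]
  field_simp

theorem wirtinger_inequality {f f' : ℝ → ℝ} (hf : ∀ x, HasDerivAt f (f' x) x)
    (hf' : Continuous f') (hab : a < b) (hfab : f a = f b) :
    (2 * π / (b - a)) ^ 2 * ((∫ x in a..b, f x ^ 2) - (b - a)⁻¹ * (∫ x in a..b, f x) ^ 2) ≤
      ∫ x in a..b, f' x ^ 2 := by
  have hba : 0 < b - a := sub_pos.2 hab
  have hcf : Continuous f := continuous_iff_continuousAt.2 fun x => (hf x).continuousAt
  have hsum := ((hasSum_norm_sq_fourierCoeffOn_ofReal hcf hab).sub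
    (hasSum_ite_eq 0 (((b - a)⁻¹ * ∫ x in a..b, f x) ^ 2))).mul_left ((2 * π / (b - a)) ^ 2)
  have key : (2 * π / (b - a)) ^ 2 * ((b - a)⁻¹ * (∫ x in a..b, f x ^ 2) -
      ((b - a)⁻¹ * ∫ x in a..b, f x) ^ 2) ≤ (b - a)⁻¹ * ∫ x in a..b, f' x ^ 2 := by
    refine hasSum_le (fun n => ?_) hsum (hasSum_norm_sq_fourierCoeffOn_ofReal hf' hab)
    rcases eq_or_ne n 0 with rfl | hn
    · simp only [if_true, norm_sq_fourierCoeffOn_zero_ofReal f, sub_self, mul_zero]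
      positivity
    · rw [norm_sq_fourierCoeffOn_of_hasDerivAt hf hf' hab hfab hn, if_neg hn, sub_zero]
      have hn1 : (1 : ℝ) ≤ n ^ 2 := by
        exact_mod_cast Int.one_le_abs (pow_ne_zero 2 hn) |>.trans_eq (abs_sq n)
      gcongr
      exact le_mul_of_one_le_right (by positivity) hn1
  refine le_of_mul_le_mul_left (le_of_eq_of_le ?_ key) (inv_pos.2 hba)
  ring

end Wirtinger

section PartialDerivatives

variable {u w : ℝ × ℝ → ℝ}

theorem contDiff_pd (hu : ContDiff ℝ (⊤ : ℕ∞) u) (v : ℝ × ℝ) : ContDiff ℝ (⊤ : ℕ∞) (pd v u) :=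
  (hu.fderiv_right (m := (⊤ : ℕ∞)) (by simp)).clm_apply contDiff_const

theorem continuous_lap (hu : ContDiff ℝ (⊤ : ℕ∞) u) : Continuous (lap u) :=
  (contDiff_pd (contDiff_pd hu _) _).continuous.add (contDiff_pd (contDiff_pd hu _) _).continuous

theorem hasDerivAt_pd_fst (hu : ContDiff ℝ (⊤ : ℕ∞) u) (x y : ℝ) :
    HasDerivAt (fun s => u (s, y)) (pd (1, 0) u (x, y)) x :=
  (hu.differentiable (by simp) (x, y)).hasFDerivAt.comp_hasDerivAt x
    ((hasDerivAt_id x).prodMk (hasDerivAt_const x y))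

theorem hasDerivAt_pd_snd (hu : ContDiff ℝ (⊤ : ℕ∞) u) (x y : ℝ) :
    HasDerivAt (fun s => u (x, s)) (pd (0, 1) u (x, y)) y :=
  (hu.differentiable (by simp) (x, y)).hasFDerivAt.comp_hasDerivAt y
    ((hasDerivAt_const y x).prodMk (hasDerivAt_id y))

theorem pd_add (hu : ContDiff ℝ (⊤ : ℕ∞) u) (hw : ContDiff ℝ (⊤ : ℕ∞) w) (v : ℝ × ℝ) :
    pd v (u + w) = pd v u + pd v w := by
  funext p
  simp [pd, fderiv_add (hu.differentiable (by simp) p) (hw.differentiable (by simp) p)]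

theorem pd_const_smul (hu : ContDiff ℝ (⊤ : ℕ∞) u) (c : ℝ) (v : ℝ × ℝ) :
    pd v (c • u) = c • pd v u := by
  funext p
  simp [pd, fderiv_const_smul (hu.differentiable (by simp) p)]

theorem lap_add (hu : ContDiff ℝ (⊤ : ℕ∞) u) (hw : ContDiff ℝ (⊤ : ℕ∞) w) :
    lap (u + w) = lap u + lap w := by
  funext p
  simp only [lap, uxx, uyy, pd_add hu hw, pd_add (contDiff_pd hu _) (contDiff_pd hw _),
    Pi.add_apply]
  ring

theorem lap_const_smul (hu : ContDiff ℝ (⊤ : ℕ∞) u) (c : ℝ) : lap (c • u) = c • lap u := by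
  funext p
  simp only [lap, uxx, uyy, pd_const_smul hu, pd_const_smul (contDiff_pd hu _), Pi.smul_apply,
    smul_add]

end PartialDerivatives

section Rectangle

variable {a : ℝ} {f g : ℝ × ℝ → ℝ}

theorem isOpen_Rect (a : ℝ) : IsOpen (Rect a) := isOpen_Ioo.prod isOpen_Ioo

theorem isBounded_Rect (a : ℝ) : Bornology.IsBounded (Rect a) :=
  (Metric.isBounded_Ioo 0 a).prod (Metric.isBounded_Ioo 0 (1 / a))

theorem frontier_Rect (ha : 0 < a) :
    frontier (Rect a) = Set.Icc 0 a ×ˢ {0, 1 / a} ∪ {0, a} ×ˢ Set.Icc 0 (1 / a) := by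
  have ha' : 0 < 1 / a := one_div_pos.2 ha
  rw [Rect, frontier_prod_eq, frontier_Ioo ha, frontier_Ioo ha', closure_Ioo ha.ne,
    closure_Ioo ha'.ne]

theorem integrableOn_of_isBounded (hf : Continuous f) {Ω : Set (ℝ × ℝ)}
    (hΩ : Bornology.IsBounded Ω) : IntegrableOn f Ω :=
  (hf.continuousOn.integrableOn_compact hΩ.isCompact_closure).mono_set subset_closure

theorem integrableOn_Rect (hf : Continuous f) (a : ℝ) : IntegrableOn f (Rect a) :=
  integrableOn_of_isBounded hf (isBounded_Rect a)

theorem integral_Rect_add (hf : Continuous f) (hg : Continuous g) (a : ℝ) :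
    ∫ p in Rect a, (f p + g p) = (∫ p in Rect a, f p) + ∫ p in Rect a, g p :=
  integral_add (integrableOn_Rect hf a) (integrableOn_Rect hg a)

theorem integral_Rect_eq_fst (ha : 0 < a) (hf : Continuous f) :
    ∫ p in Rect a, f p = ∫ x in 0..a, ∫ y in 0..1 / a, f (x, y) := by
  rw [Rect, Measure.volume_eq_prod, setIntegral_prod f (integrableOn_Rect hf a),
    intervalIntegral.integral_of_le ha.le, integral_Ioc_eq_integral_Ioo]
  simp only [intervalIntegral.integral_of_le (one_div_pos.2 ha).le, integral_Ioc_eq_integral_Ioo]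

theorem integral_Rect_eq_snd (ha : 0 < a) (hf : Continuous f) :
    ∫ p in Rect a, f p = ∫ y in 0..1 / a, ∫ x in 0..a, f (x, y) := by
  rw [Rect, Measure.volume_eq_prod, ← setIntegral_prod_swap,
    setIntegral_prod (fun p => f p.swap) (integrableOn_Rect hf a).swap,
    intervalIntegral.integral_of_le (one_div_pos.2 ha).le, integral_Ioc_eq_integral_Ioo]
  simp only [intervalIntegral.integral_of_le ha.le, integral_Ioc_eq_integral_Ioo, Prod.swap_prod_mk]

theorem integral_mul_pd_fst (ha : 0 < a) (hf : ContDiff ℝ (⊤ : ℕ∞) f)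
    (hg : ContDiff ℝ (⊤ : ℕ∞) g) (hg0 : ∀ p ∈ frontier (Rect a), g p = 0) :
    ∫ p in Rect a, f p * pd (1, 0) g p = -∫ p in Rect a, pd (1, 0) f p * g p := by
  have cf := (contDiff_pd hf (1, 0)).continuous
  have cg := (contDiff_pd hg (1, 0)).continuous
  rw [frontier_Rect ha] at hg0
  rw [integral_Rect_eq_snd ha (hf.continuous.fun_mul cg),
    integral_Rect_eq_snd ha (cf.fun_mul hg.continuous), ← intervalIntegral.integral_neg]
  refine intervalIntegral.integral_congr fun y hy => ?_
  rw [Set.uIcc_of_le (one_div_pos.2 ha).le] at hy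
  rw [intervalIntegral.integral_mul_deriv_eq_deriv_mul (fun x _ => hasDerivAt_pd_fst hf x y)
    (fun x _ => hasDerivAt_pd_fst hg x y)
    ((by fun_prop : Continuous fun x => pd (1, 0) f (x, y)).intervalIntegrable _ _)
    ((by fun_prop : Continuous fun x => pd (1, 0) g (x, y)).intervalIntegrable _ _),
    hg0 (0, y) (.inr ⟨by simp, hy⟩), hg0 (a, y) (.inr ⟨by simp, hy⟩)]
  simp

theorem integral_mul_pd_snd (ha : 0 < a) (hf : ContDiff ℝ (⊤ : ℕ∞) f)
    (hg : ContDiff ℝ (⊤ : ℕ∞) g) (hg0 : ∀ p ∈ frontier (Rect a), g p = 0) :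
    ∫ p in Rect a, f p * pd (0, 1) g p = -∫ p in Rect a, pd (0, 1) f p * g p := by
  have cf := (contDiff_pd hf (0, 1)).continuous
  have cg := (contDiff_pd hg (0, 1)).continuous
  rw [frontier_Rect ha] at hg0
  rw [integral_Rect_eq_fst ha (hf.continuous.fun_mul cg),
    integral_Rect_eq_fst ha (cf.fun_mul hg.continuous), ← intervalIntegral.integral_neg]
  refine intervalIntegral.integral_congr fun x hx => ?_
  rw [Set.uIcc_of_le ha.le] at hx
  rw [intervalIntegral.integral_mul_deriv_eq_deriv_mul (fun y _ => hasDerivAt_pd_snd hf x y)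
    (fun y _ => hasDerivAt_pd_snd hg x y)
    ((by fun_prop : Continuous fun y => pd (0, 1) f (x, y)).intervalIntegrable _ _)
    ((by fun_prop : Continuous fun y => pd (0, 1) g (x, y)).intervalIntegrable _ _),
    hg0 (x, 0) (.inl ⟨hx, by simp⟩), hg0 (x, 1 / a) (.inl ⟨hx, by simp⟩)]
  simp

end Rectangle

section Clamped

/-- The smooth functions satisfying the clamped boundary conditions on `Ω`: both the function and
its derivative vanish on the frontier. -/
def clamped (Ω : Set (ℝ × ℝ)) : Submodule ℝ (ℝ × ℝ → ℝ) where
  carrier := {w | ContDiff ℝ (⊤ : ℕ∞) w ∧ ∀ p ∈ frontier Ω, w p = 0 ∧ fderiv ℝ w p = 0}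
  zero_mem' := ⟨contDiff_const, by simp⟩
  add_mem' := by
    rintro u w ⟨hu, hu0⟩ ⟨hw, hw0⟩
    refine ⟨hu.add hw, fun p hp => ⟨by simp [hu0 p hp, hw0 p hp], ?_⟩⟩
    rw [fderiv_add (hu.differentiable (by simp) p) (hw.differentiable (by simp) p),
      (hu0 p hp).2, (hw0 p hp).2, add_zero]
  smul_mem' := by
    rintro c u ⟨hu, hu0⟩
    refine ⟨contDiff_const.smul hu, fun p hp => ⟨by simp [hu0 p hp], ?_⟩⟩
    rw [fderiv_const_smul (hu.differentiable (by simp) p), (hu0 p hp).2, smul_zero]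

variable {a : ℝ} {s w : ℝ × ℝ → ℝ}

theorem pd_eq_zero_of_mem_clamped {Ω : Set (ℝ × ℝ)} (hw : w ∈ clamped Ω) (v : ℝ × ℝ) :
    ∀ p ∈ frontier Ω, pd v w p = 0 := fun p hp => by
  rw [pd, (hw.2 p hp).2, zero_apply]

theorem integral_lap_mul_eq_neg_integral_grad (ha : 0 < a) (hw : w ∈ clamped (Rect a))
    (hs : ContDiff ℝ (⊤ : ℕ∞) s) :
    ∫ p in Rect a, lap w p * s p =
      -∫ p in Rect a, (pd (1, 0) w p * pd (1, 0) s p + pd (0, 1) w p * pd (0, 1) s p) := by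
  have c := fun v => (contDiff_pd hw.1 v).continuous
  have c' := fun v => (contDiff_pd hs v).continuous
  have cc := fun v => (contDiff_pd (contDiff_pd hw.1 v) v).continuous
  have cs := hs.continuous
  have h1 := integral_mul_pd_fst ha hs (contDiff_pd hw.1 (1, 0)) (pd_eq_zero_of_mem_clamped hw _)
  have h2 := integral_mul_pd_snd ha hs (contDiff_pd hw.1 (0, 1)) (pd_eq_zero_of_mem_clamped hw _)
  simp only [mul_comm (s _), mul_comm (pd _ s _)] at h1 h2
  simp only [lap, uxx, uyy, add_mul]
  rw [integral_Rect_add ((cc _).fun_mul cs) ((cc _).fun_mul cs), h1, h2,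
    integral_Rect_add ((c _).fun_mul (c' _)) ((c _).fun_mul (c' _)), neg_add]

theorem integral_lap_mul_eq_integral_mul_lap (ha : 0 < a) (hw : w ∈ clamped (Rect a))
    (hs : ContDiff ℝ (⊤ : ℕ∞) s) :
    ∫ p in Rect a, lap w p * s p = ∫ p in Rect a, w p * lap s p := by
  have c := fun v => (contDiff_pd hw.1 v).continuous
  have c' := fun v => (contDiff_pd hs v).continuous
  have cc' := fun v => (contDiff_pd (contDiff_pd hs v) v).continuous
  have cw := hw.1.continuous
  have h1 := integral_mul_pd_fst ha (contDiff_pd hs (1, 0)) hw.1 fun p hp => (hw.2 p hp).1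
  have h2 := integral_mul_pd_snd ha (contDiff_pd hs (0, 1)) hw.1 fun p hp => (hw.2 p hp).1
  simp only [mul_comm _ (w _), mul_comm (pd _ s _)] at h1 h2
  rw [integral_lap_mul_eq_neg_integral_grad ha hw hs,
    integral_Rect_add ((c _).fun_mul (c' _)) ((c _).fun_mul (c' _)), h1, h2]
  simp only [lap, uxx, uyy, mul_add]
  rw [integral_Rect_add (cw.fun_mul (cc' _)) (cw.fun_mul (cc' _)), neg_add, neg_neg, neg_neg]

end Clamped

section Poincare

variable {a b : ℝ} {w : ℝ × ℝ → ℝ}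

theorem integral_sub_average_sq {f : ℝ → ℝ} (hf : Continuous f) (hab : a < b) :
    ∫ x in a..b, (f x - (b - a)⁻¹ * ∫ t in a..b, f t) ^ 2 =
      (∫ x in a..b, f x ^ 2) - (b - a)⁻¹ * (∫ x in a..b, f x) ^ 2 := by
  have hba : b - a ≠ 0 := (sub_pos.2 hab).ne'
  have hint : ∀ g : ℝ → ℝ, Continuous g → IntervalIntegrable g volume a b :=
    fun g hg => hg.intervalIntegrable a b
  set m := (b - a)⁻¹ * ∫ t in a..b, f t with hm
  calc ∫ x in a..b, (f x - m) ^ 2 = ∫ x in a..b, (f x ^ 2 - 2 * m * f x + m ^ 2) := by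
        congr 1 with x; ring
    _ = (∫ x in a..b, f x ^ 2) - 2 * m * (∫ x in a..b, f x) + (b - a) * m ^ 2 := by
        rw [intervalIntegral.integral_add (hint _ (by fun_prop)) (hint _ (by fun_prop)),
          intervalIntegral.integral_sub (hint _ (by fun_prop)) (hint _ (by fun_prop)),
          intervalIntegral.integral_const_mul, intervalIntegral.integral_const, smul_eq_mul]
    _ = _ := by rw [hm]; field_simp; ring

theorem average_sq_le_integral_sq {f : ℝ → ℝ} (hf : Continuous f) (hab : a < b) :
    (b - a)⁻¹ * (∫ x in a..b, f x) ^ 2 ≤ ∫ x in a..b, f x ^ 2 := by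
  rw [← sub_nonneg, ← integral_sub_average_sq hf hab]
  exact intervalIntegral.integral_nonneg hab.le fun x _ => sq_nonneg _

theorem continuous_integral_fst (hw : Continuous w) (a b : ℝ) :
    Continuous fun y => ∫ x in a..b, w (x, y) :=
  intervalIntegral.continuous_parametric_intervalIntegral_of_continuous'
    (f := fun y x => w (x, y)) (by fun_prop) a b

theorem continuous_integral_snd (hw : Continuous w) (a b : ℝ) :
    Continuous fun x => ∫ y in a..b, w (x, y) :=
  intervalIntegral.continuous_parametric_intervalIntegral_of_continuous'
    (f := fun x y => w (x, y)) (by fun_prop) a b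

theorem integral_sub_slice_average_sq (ha : 0 < a) (hw : Continuous w) :
    ∫ p in Rect a, (w p - a * ∫ y in 0..1 / a, w (p.1, y)) ^ 2 =
      (∫ p in Rect a, w p ^ 2) - a * ∫ x in 0..a, (∫ y in 0..1 / a, w (x, y)) ^ 2 := by
  have hB := continuous_integral_snd hw 0 (1 / a)
  rw [integral_Rect_eq_fst ha (by fun_prop), integral_Rect_eq_fst ha (hw.fun_pow 2),
    ← intervalIntegral.integral_const_mul, ← intervalIntegral.integral_sub
    ((continuous_integral_snd (hw.fun_pow 2) _ _).intervalIntegrable _ _)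
    ((continuous_const.fun_mul (hB.fun_pow 2)).intervalIntegrable _ _)]
  refine intervalIntegral.integral_congr fun x _ => ?_
  simpa using integral_sub_average_sq (f := fun y => w (x, y)) (by fun_prop) (one_div_pos.2 ha)

theorem integral_marginals_sq_le (ha : 0 < a) (hw : Continuous w) :
    a⁻¹ * (∫ y in 0..1 / a, (∫ x in 0..a, w (x, y)) ^ 2) +
        a * (∫ x in 0..a, (∫ y in 0..1 / a, w (x, y)) ^ 2) ≤
      (∫ p in Rect a, w p ^ 2) + (∫ p in Rect a, w p) ^ 2 := by
  have ha' : 0 < 1 / a := one_div_pos.2 ha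
  have hA := continuous_integral_fst hw 0 a
  have hB := continuous_integral_snd hw 0 (1 / a)
  have hMA := integral_Rect_eq_snd ha hw
  have hMB := integral_Rect_eq_fst ha hw
  set M := ∫ p in Rect a, w p
  set A := fun y => ∫ x in 0..a, w (x, y)
  set B := fun x => ∫ y in 0..1 / a, w (x, y)
  have hg : Continuous fun p : ℝ × ℝ => (w p - a * B p.1) ^ 2 := by fun_prop
  have hjensen : ∀ y, a⁻¹ * (A y - a * M) ^ 2 ≤ ∫ x in 0..a, (w (x, y) - a * B x) ^ 2 := by
    intro y
    have h := average_sq_le_integral_sq (f := fun x => w (x, y) - a * B x) (by fun_prop) ha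
    rwa [intervalIntegral.integral_sub
      ((by fun_prop : Continuous fun x => w (x, y)).intervalIntegrable _ _)
      ((by fun_prop : Continuous fun x => a * B x).intervalIntegrable _ _),
      intervalIntegral.integral_const_mul, ← hMB, sub_zero] at h
  have hleft : ∫ y in 0..1 / a, (A y - a * M) ^ 2 = (∫ y in 0..1 / a, A y ^ 2) - a * M ^ 2 := by
    have h := integral_sub_average_sq hA ha'
    rw [← hMA] at h
    simpa using h
  have hmono := intervalIntegral.integral_mono (μ := volume) ha'.le
    ((by fun_prop : Continuous fun y => a⁻¹ * (A y - a * M) ^ 2).intervalIntegrable _ _)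
    ((continuous_integral_fst hg 0 a).intervalIntegrable _ _) hjensen
  rw [← integral_Rect_eq_snd ha hg, integral_sub_slice_average_sq ha hw,
    intervalIntegral.integral_const_mul, hleft, mul_sub, inv_mul_cancel_left₀ ha.ne'] at hmono
  linarith

theorem wirtinger_Rect_fst (ha : 0 < a) (hw : ContDiff ℝ (⊤ : ℕ∞) w)
    (hw0 : ∀ p ∈ frontier (Rect a), w p = 0) :
    (2 * π / a) ^ 2 * ((∫ p in Rect a, w p ^ 2) -
        a⁻¹ * ∫ y in 0..1 / a, (∫ x in 0..a, w (x, y)) ^ 2) ≤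
      ∫ p in Rect a, pd (1, 0) w p ^ 2 := by
  have c := hw.continuous
  have c' := (contDiff_pd hw (1, 0)).continuous
  have i0 := continuous_integral_fst c 0 a
  have i1 := continuous_integral_fst (c.fun_pow 2) 0 a
  have i2 := continuous_integral_fst (c'.fun_pow 2) 0 a
  rw [frontier_Rect ha] at hw0
  rw [integral_Rect_eq_snd ha (c.fun_pow 2), integral_Rect_eq_snd ha (c'.fun_pow 2),
    ← intervalIntegral.integral_const_mul, ← intervalIntegral.integral_sub
    (i1.intervalIntegrable _ _) ((continuous_const.fun_mul (i0.fun_pow 2)).intervalIntegrable _ _),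
    ← intervalIntegral.integral_const_mul]
  refine intervalIntegral.integral_mono_on (one_div_pos.2 ha).le
    ((by fun_prop : Continuous _).intervalIntegrable _ _) (i2.intervalIntegrable _ _) fun y hy => ?_
  simpa using wirtinger_inequality (fun x => hasDerivAt_pd_fst hw x y) (by fun_prop) ha
    ((hw0 (0, y) (.inr ⟨by simp, hy⟩)).trans (hw0 (a, y) (.inr ⟨by simp, hy⟩)).symm)

theorem wirtinger_Rect_snd (ha : 0 < a) (hw : ContDiff ℝ (⊤ : ℕ∞) w)
    (hw0 : ∀ p ∈ frontier (Rect a), w p = 0) :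
    (2 * π * a) ^ 2 * ((∫ p in Rect a, w p ^ 2) -
        a * ∫ x in 0..a, (∫ y in 0..1 / a, w (x, y)) ^ 2) ≤
      ∫ p in Rect a, pd (0, 1) w p ^ 2 := by
  have c := hw.continuous
  have c' := (contDiff_pd hw (0, 1)).continuous
  have i0 := continuous_integral_snd c 0 (1 / a)
  have i1 := continuous_integral_snd (c.fun_pow 2) 0 (1 / a)
  have i2 := continuous_integral_snd (c'.fun_pow 2) 0 (1 / a)
  rw [frontier_Rect ha] at hw0
  rw [integral_Rect_eq_fst ha (c.fun_pow 2), integral_Rect_eq_fst ha (c'.fun_pow 2),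
    ← intervalIntegral.integral_const_mul, ← intervalIntegral.integral_sub
    (i1.intervalIntegrable _ _) ((continuous_const.fun_mul (i0.fun_pow 2)).intervalIntegrable _ _),
    ← intervalIntegral.integral_const_mul]
  refine intervalIntegral.integral_mono_on ha.le
    ((by fun_prop : Continuous _).intervalIntegrable _ _) (i2.intervalIntegrable _ _) fun x hx => ?_
  simpa using wirtinger_inequality (fun y => hasDerivAt_pd_snd hw x y) (by fun_prop)
    (one_div_pos.2 ha)
    ((hw0 (x, 0) (.inl ⟨hx, by simp⟩)).trans (hw0 (x, 1 / a) (.inl ⟨hx, by simp⟩)).symm)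

theorem poincare_Rect (ha : 1 ≤ a) (hw : ContDiff ℝ (⊤ : ℕ∞) w)
    (hw0 : ∀ p ∈ frontier (Rect a), w p = 0) :
    (2 * π / a) ^ 2 * ((∫ p in Rect a, w p ^ 2) - (∫ p in Rect a, w p) ^ 2) ≤
      ∫ p in Rect a, (pd (1, 0) w p ^ 2 + pd (0, 1) w p ^ 2) := by
  have ha0 : 0 < a := one_pos.trans_le ha
  have hx := wirtinger_Rect_fst ha0 hw hw0
  have hy := wirtinger_Rect_snd ha0 hw hw0
  have hmarg := integral_marginals_sq_le ha0 hw.continuous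
  set M := ∫ x in 0..a, (∫ y in 0..1 / a, w (x, y)) ^ 2
  have hM : 0 ≤ (∫ p in Rect a, w p ^ 2) - a * M := by
    rw [← integral_sub_slice_average_sq ha0 hw.continuous]
    exact integral_nonneg fun p => sq_nonneg _
  have hle : (2 * π / a) ^ 2 ≤ (2 * π * a) ^ 2 := by
    have : 2 * π / a ≤ 2 * π * a := (div_le_self (by positivity) ha).trans
      (le_mul_of_one_le_right (by positivity) ha)
    gcongr
  rw [integral_Rect_add ((contDiff_pd hw _).continuous.fun_pow 2)
    ((contDiff_pd hw _).continuous.fun_pow 2)]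
  calc _ ≤ (2 * π / a) ^ 2 * (((∫ p in Rect a, w p ^ 2) -
          a⁻¹ * ∫ y in 0..1 / a, (∫ x in 0..a, w (x, y)) ^ 2) +
        ((∫ p in Rect a, w p ^ 2) - a * M)) := by gcongr; linarith
    _ ≤ _ := by
      rw [mul_add]
      exact add_le_add hx ((mul_le_mul_of_nonneg_right hle hM).trans hy)

end Poincare

section SquareIntegrable

open RealInnerProductSpace

variable {a : ℝ}

theorem memLp_two_Rect (f : C(ℝ × ℝ, ℝ)) (a : ℝ) : MemLp f 2 (volume.restrict (Rect a)) :=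
  (memLp_two_iff_integrable_sq (by fun_prop)).2 (integrableOn_Rect (f.continuous.fun_pow 2) a)

/-- The restriction to `Rect a` of a continuous function on the plane, as an element of `L²`. -/
def toL2 (a : ℝ) : C(ℝ × ℝ, ℝ) →ₗ[ℝ] Lp ℝ 2 (volume.restrict (Rect a)) where
  toFun f := (memLp_two_Rect f a).toLp f
  map_add' f g := MemLp.toLp_add (memLp_two_Rect f a) (memLp_two_Rect g a)
  map_smul' c f := MemLp.toLp_const_smul c (memLp_two_Rect f a)

theorem inner_toL2 (f g : C(ℝ × ℝ, ℝ)) : ⟪toL2 a f, toL2 a g⟫ = ∫ p in Rect a, f p * g p := by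
  rw [L2.inner_def]
  refine integral_congr_ae ?_
  filter_upwards [(memLp_two_Rect f a).coeFn_toLp, (memLp_two_Rect g a).coeFn_toLp] with p hf hg
  simp [toL2, hf, hg, mul_comm]

theorem norm_toL2_sq (f : C(ℝ × ℝ, ℝ)) : ‖toL2 a f‖ ^ 2 = ∫ p in Rect a, f p ^ 2 := by
  simp_rw [← real_inner_self_eq_norm_sq, inner_toL2, sq]

/-- The inclusion of the clamped functions into the continuous functions. -/
def clampedVal (Ω : Set (ℝ × ℝ)) : clamped Ω →ₗ[ℝ] C(ℝ × ℝ, ℝ) where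
  toFun w := ⟨w, w.2.1.continuous⟩
  map_add' _ _ := rfl
  map_smul' _ _ := rfl

/-- The Laplacian as a linear operator from the clamped functions to the continuous functions. -/
def clampedLap (Ω : Set (ℝ × ℝ)) : clamped Ω →ₗ[ℝ] C(ℝ × ℝ, ℝ) where
  toFun w := ⟨lap w, continuous_lap w.2.1⟩
  map_add' u w := ContinuousMap.coe_injective (lap_add u.2.1 w.2.1)
  map_smul' c w := ContinuousMap.coe_injective (lap_const_smul w.2.1 c)

theorem inner_clampedLap_eq_inner_clampedVal (ha : 0 < a) (w : clamped (Rect a))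
    {s t : C(ℝ × ℝ, ℝ)} (hs : ContDiff ℝ (⊤ : ℕ∞) s) (hst : lap s = t) :
    ⟪toL2 a (clampedLap _ w), toL2 a s⟫ = ⟪toL2 a (clampedVal _ w), toL2 a t⟫ := by
  rw [inner_toL2, inner_toL2, ← hst]
  exact integral_lap_mul_eq_integral_mul_lap ha w.2 hs

theorem inner_clampedLap_clampedVal_le (ha : 1 ≤ a) (w : clamped (Rect a))
    (hw : ⟪toL2 a 1, toL2 a (clampedVal _ w)⟫ = 0) :
    ⟪toL2 a (clampedLap _ w), toL2 a (clampedVal _ w)⟫ ≤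
      -((2 * π / a) ^ 2 * ‖toL2 a (clampedVal _ w)‖ ^ 2) := by
  have hint : ∫ p in Rect a, (w : ℝ × ℝ → ℝ) p = 0 := by simpa [inner_toL2, clampedVal] using hw
  have hpoincare := poincare_Rect ha w.2.1 fun p hp => (w.2.2 p hp).1
  rw [hint, sq 0, mul_zero, sub_zero] at hpoincare
  have hgreen := integral_lap_mul_eq_neg_integral_grad (one_pos.trans_le ha) w.2 w.2.1
  rw [inner_toL2, norm_toL2_sq]
  refine hgreen.trans_le (neg_le_neg ?_)
  simp only [sq (pd _ _ _)] at hpoincare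
  exact hpoincare

theorem mul_norm_clampedVal_sq_le (ha : 1 ≤ a) (w : clamped (Rect a))
    (hw : ⟪toL2 a 1, toL2 a (clampedVal _ w)⟫ = 0) :
    (2 * π / a) ^ 4 * ‖toL2 a (clampedVal _ w)‖ ^ 2 ≤ ‖toL2 a (clampedLap _ w)‖ ^ 2 := by
  have hinner := inner_clampedLap_clampedVal_le ha w hw
  set c := (2 * π / a) ^ 2 with hc
  have hsq : 0 ≤ ‖toL2 a (clampedLap _ w) + c • toL2 a (clampedVal _ w)‖ ^ 2 := by positivity
  rw [norm_add_sq_real, inner_smul_right, norm_smul, mul_pow, norm_eq_abs, sq_abs] at hsq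
  have : 0 ≤ c := by positivity
  rw [show (2 * π / a) ^ 4 = c ^ 2 by rw [hc]; ring]
  linear_combination hsq + 2 * c * hinner

theorem mul_integral_sq_le_integral_lap_sq {μ ρ : ℝ} {u s w : ℝ × ℝ → ℝ} (ha : 1 ≤ a) (hμ : 0 < μ)
    (hμρ : μ < ρ) (hρ : ρ ≤ (2 * π / a) ^ 4) (hu : u ∈ clamped (Rect a))
    (hs : ContDiff ℝ (⊤ : ℕ∞) s) (hsu : lap s = u)
    (hupper : ∫ p in Rect a, lap u p ^ 2 < ρ * ∫ p in Rect a, u p ^ 2)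
    (hlower : μ * (ρ * (∫ p in Rect a, s p ^ 2) - ∫ p in Rect a, u p ^ 2) ≤
      ρ * (∫ p in Rect a, u p ^ 2) - ∫ p in Rect a, lap u p ^ 2) (hw : w ∈ clamped (Rect a)) :
    μ * ∫ p in Rect a, w p ^ 2 ≤ ∫ p in Rect a, lap w p ^ 2 := by
  have key := lehmann_bound (toL2 a ∘ₗ clampedVal _) (toL2 a ∘ₗ clampedLap _) (toL2 a 1)
    hμ hμρ (fun w hw => (mul_le_mul_of_nonneg_right hρ (sq_nonneg _)).trans
      (mul_norm_clampedVal_sq_le ha w hw)) (u := ⟨u, hu⟩) (s := toL2 a ⟨s, hs.continuous⟩)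
    (fun v => inner_clampedLap_eq_inner_clampedVal (one_pos.trans_le ha) v hs hsu)
  simp only [LinearMap.comp_apply, norm_toL2_sq] at key
  exact key hupper hlower ⟨w, hw⟩

end SquareIntegrable

section Admissible

variable {a : ℝ} {Ω : Set (ℝ × ℝ)} {u : ℝ × ℝ → ℝ}

theorem Adm.eq_zero (hu : Adm Ω u) {p : ℝ × ℝ} (hp : p ∉ Ω) : u p = 0 :=
  image_eq_zero_of_notMem_tsupport fun h => hp (hu.2.2 h)

theorem Adm.fderiv_eq_zero (hu : Adm Ω u) {p : ℝ × ℝ} (hp : p ∉ Ω) : fderiv ℝ u p = 0 :=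
  image_eq_zero_of_notMem_tsupport fun h => hp (hu.2.2 (tsupport_fderiv_subset ℝ h))

theorem Adm.pd (hu : Adm Ω u) (v : ℝ × ℝ) : Adm Ω (pd v u) := by
  have h : tsupport (_root_.pd v u) ⊆ tsupport u := tsupport_fderiv_apply_subset ℝ v
  exact ⟨contDiff_pd hu.1 v, hu.2.1.of_isClosed_subset isClosed_closure h, h.trans hu.2.2⟩

theorem Adm.lap_eq_zero (hu : Adm Ω u) {p : ℝ × ℝ} (hp : p ∉ Ω) : lap u p = 0 := by
  simp [lap, uxx, uyy, ((hu.pd _).pd _).eq_zero hp]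

theorem Adm.mem_clamped (hΩ : IsOpen Ω) (hu : Adm Ω u) : u ∈ clamped Ω :=
  ⟨hu.1, fun _ hp =>
    ⟨hu.eq_zero (hΩ.frontier_eq ▸ hp).2, hu.fderiv_eq_zero (hΩ.frontier_eq ▸ hp).2⟩⟩

theorem Adm.setIntegral_sq (hu : Adm Ω u) : ∫ p in Ω, u p ^ 2 = ∫ p, u p ^ 2 :=
  setIntegral_eq_integral_of_forall_compl_eq_zero fun _ hp => by
    rw [hu.eq_zero hp, zero_pow two_ne_zero]

theorem Adm.setIntegral_lap_sq (hu : Adm Ω u) : ∫ p in Ω, lap u p ^ 2 = ∫ p, lap u p ^ 2 :=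
  setIntegral_eq_integral_of_forall_compl_eq_zero fun _ hp => by
    rw [hu.lap_eq_zero hp, zero_pow two_ne_zero]

theorem Adm.integral_sq_pos (hu : Adm Ω u) (h0 : u ≠ 0) : 0 < ∫ p, u p ^ 2 := by
  obtain ⟨p, hp⟩ := Function.ne_iff.1 h0
  exact (hu.1.continuous.pow 2).integral_pos_of_hasCompactSupport_nonneg_nonzero
    (hu.2.1.comp_left (g := fun x => x ^ 2) (by simp)) (fun p => sq_nonneg _)
    (x := p) (pow_ne_zero 2 hp)

theorem exists_adm_ne_zero (hΩ : IsOpen Ω) (hne : Ω.Nonempty) : ∃ u, Adm Ω u ∧ u ≠ 0 := by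
  obtain ⟨p, hp⟩ := hne
  obtain ⟨u, hsupp, hcomp, hu, -, hup⟩ :=
    exists_contDiff_tsupport_subset (n := (⊤ : ℕ∞)) (hΩ.mem_nhds hp)
  exact ⟨u, ⟨hu, hcomp, hsupp⟩, fun h => by simp [h] at hup⟩

theorem nonempty_Rect (ha : 0 < a) : (Rect a).Nonempty :=
  (Set.nonempty_Ioo.2 ha).prod (Set.nonempty_Ioo.2 (one_div_pos.2 ha))

theorem le_lam1 {μ : ℝ} (ha : 0 < a)
    (h : ∀ w ∈ clamped (Rect a), μ * ∫ p in Rect a, w p ^ 2 ≤ ∫ p in Rect a, lap w p ^ 2) :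
    μ ≤ lam1 a := by
  obtain ⟨w, hw, hw0⟩ := exists_adm_ne_zero (isOpen_Rect a) (nonempty_Rect ha)
  refine le_csInf ⟨_, w, hw, hw0, rfl⟩ ?_
  rintro _ ⟨u, hu, hu0, rfl⟩
  rw [le_div_iff₀ (hu.integral_sq_pos hu0), ← hu.setIntegral_sq, ← hu.setIntegral_lap_sq]
  exact h u (hu.mem_clamped (isOpen_Rect a))

theorem lam1_le (hu : Adm (Rect a) u) (h0 : u ≠ 0) :
    lam1 a ≤ (∫ p, lap u p ^ 2) / ∫ p, u p ^ 2 := by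
  refine csInf_le ⟨0, ?_⟩ ⟨u, hu, h0, rfl⟩
  rintro _ ⟨w, -, -, rfl⟩
  exact div_nonneg (integral_nonneg fun p => sq_nonneg _) (integral_nonneg fun p => sq_nonneg _)

end Admissible

section SquareCutoff

open Topology

theorem exists_forall_abs_le_of_eventually_const {f : ℝ → ℝ} (hf : Continuous f) {a b c c' : ℝ}
    (ha : ∀ x < a, f x = c) (hb : ∀ x > b, f x = c') : ∃ C, ∀ x, |f x| ≤ C := by
  obtain ⟨C, hC⟩ := isCompact_Icc.exists_bound_of_continuousOn (s := Set.Icc a b) hf.continuousOn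
  refine ⟨max C (max |c| |c'|), fun x => ?_⟩
  rcases lt_or_ge x a with hx | hx
  · simp [ha x hx]
  rcases lt_or_ge b x with hx' | hx'
  · simp [hb x hx']
  · exact (hC x ⟨hx, hx'⟩).trans (le_max_left _ _)

/-- A smooth approximation of the square function, as `r → ∞`, that vanishes on `(-∞, 1 / r]` and
agrees with the square on `[2 / r, ∞)`. -/
def sqCutoff (r s : ℝ) : ℝ := smoothTransition (r * s - 1) * s ^ 2

theorem contDiff_sqCutoff (r : ℝ) : ContDiff ℝ (⊤ : ℕ∞) (sqCutoff r) :=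
  (smoothTransition.contDiff.comp ((contDiff_const.mul contDiff_id).sub contDiff_const)).mul
    (contDiff_id.pow 2)

theorem sqCutoff_of_mul_le {r s : ℝ} (h : r * s ≤ 1) : sqCutoff r s = 0 := by
  rw [sqCutoff, smoothTransition.zero_of_nonpos (by linarith), zero_mul]

theorem sqCutoff_of_le_mul {r s : ℝ} (h : 2 ≤ r * s) : sqCutoff r s = s ^ 2 := by
  rw [sqCutoff, smoothTransition.one_of_one_le (by linarith), one_mul]

theorem abs_sqCutoff_le (r s : ℝ) : |sqCutoff r s| ≤ s ^ 2 := by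
  rw [sqCutoff, abs_of_nonneg (mul_nonneg (smoothTransition.nonneg _) (sq_nonneg _))]
  exact mul_le_of_le_one_left (sq_nonneg _) (smoothTransition.le_one _)

theorem sqCutoff_eventuallyEq_zero {r s : ℝ} (h : r * s < 1) : sqCutoff r =ᶠ[𝓝 s] fun _ => 0 := by
  filter_upwards [(continuous_const_mul r).tendsto s |>.eventually_lt_const h]
    with t ht using sqCutoff_of_mul_le ht.le

theorem sqCutoff_eventuallyEq_sq {r s : ℝ} (h : 2 < r * s) : sqCutoff r =ᶠ[𝓝 s] (· ^ 2) := by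
  filter_upwards [(continuous_const_mul r).tendsto s |>.eventually_const_lt h]
    with t ht using sqCutoff_of_le_mul ht.le

theorem exists_forall_abs_deriv_deriv_sqCutoff_one_le :
    ∃ C, ∀ s, |deriv (deriv (sqCutoff 1)) s| ≤ C := by
  refine exists_forall_abs_le_of_eventually_const (a := 1) (b := 2) (c := 0) (c' := 2) ?_
    (fun s hs => ?_) (fun s hs => ?_)
  · exact ((contDiff_sqCutoff 1).iterate_deriv 2).continuous
  · rw [(sqCutoff_eventuallyEq_zero (by linarith)).deriv.deriv_eq]
    simp
  · rw [(sqCutoff_eventuallyEq_sq (by linarith)).deriv.deriv_eq]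
    simp [funext fun x : ℝ => deriv_pow_field (x := x) 2]

theorem deriv_sqCutoff_eq {r : ℝ} (hr : r ≠ 0) :
    deriv (sqCutoff r) = fun s => r⁻¹ * deriv (sqCutoff 1) (r * s) := by
  have hscale : sqCutoff r = fun s => (r ^ 2)⁻¹ * sqCutoff 1 (r * s) := by
    funext s
    simp only [sqCutoff]
    field_simp
  funext s
  rw [hscale, deriv_const_mul_field, deriv_comp_mul_left, smul_eq_mul]
  field_simp

theorem deriv_deriv_sqCutoff_eq {r : ℝ} (hr : r ≠ 0) (s : ℝ) :
    deriv (deriv (sqCutoff r)) s = deriv (deriv (sqCutoff 1)) (r * s) := by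
  rw [deriv_sqCutoff_eq hr, deriv_const_mul_field, deriv_comp_mul_left, smul_eq_mul,
    inv_mul_cancel_left₀ hr]

theorem exists_forall_abs_deriv_sqCutoff_le : ∃ C, ∀ r ≠ 0, ∀ s,
    |deriv (sqCutoff r) s| ≤ C * |s| ∧ |deriv (deriv (sqCutoff r)) s| ≤ C := by
  obtain ⟨C, hC⟩ := exists_forall_abs_deriv_deriv_sqCutoff_one_le
  refine ⟨C, fun r hr s => ?_⟩
  have h2 : ∀ s, |deriv (deriv (sqCutoff r)) s| ≤ C := fun s => by
    rw [deriv_deriv_sqCutoff_eq hr]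
    exact hC _
  have h0 : deriv (sqCutoff r) 0 = 0 := by
    rw [(sqCutoff_eventuallyEq_zero (by simp)).deriv_eq, deriv_const]
  have hdiff := ((contDiff_sqCutoff r).iterate_deriv 1).differentiable (by simp)
  refine ⟨?_, h2 s⟩
  simpa [h0] using convex_univ.norm_image_sub_le_of_norm_deriv_le (fun x _ => hdiff x)
    (fun x _ => h2 x) (Set.mem_univ 0) (Set.mem_univ s)

end SquareCutoff

section ProductRule

variable {u w d q : ℝ × ℝ → ℝ} {g : ℝ → ℝ}

theorem pd_mul (hu : ContDiff ℝ (⊤ : ℕ∞) u) (hw : ContDiff ℝ (⊤ : ℕ∞) w) (v : ℝ × ℝ) :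
    pd v (u * w) = pd v u * w + u * pd v w := by
  funext p
  simp only [pd, fderiv_mul (hu.differentiable (by simp) p) (hw.differentiable (by simp) p),
    add_apply, smul_apply, smul_eq_mul, Pi.add_apply, Pi.mul_apply]
  ring

theorem pd_comp (hg : ContDiff ℝ (⊤ : ℕ∞) g) (hd : ContDiff ℝ (⊤ : ℕ∞) d) (v : ℝ × ℝ) :
    pd v (g ∘ d) = (deriv g ∘ d) * pd v d := by
  funext p
  have h := (hg.differentiable (by simp) (d p)).hasDerivAt.comp_hasFDerivAt p
    (hd.differentiable (by simp) p).hasFDerivAt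
  simp [pd, h.fderiv]

theorem lap_mul_comp (hq : ContDiff ℝ (⊤ : ℕ∞) q) (hg : ContDiff ℝ (⊤ : ℕ∞) g)
    (hd : ContDiff ℝ (⊤ : ℕ∞) d) (p : ℝ × ℝ) :
    lap (q * g ∘ d) p = lap q p * g (d p) +
      deriv g (d p) * (2 * (pd (1, 0) q p * pd (1, 0) d p + pd (0, 1) q p * pd (0, 1) d p) +
        q p * lap d p) +
      deriv (deriv g) (d p) * (q p * (pd (1, 0) d p ^ 2 + pd (0, 1) d p ^ 2)) := by
  have hg' : ContDiff ℝ (⊤ : ℕ∞) (deriv g) := hg.iterate_deriv 1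
  have hgd := hg.comp hd
  have hgd' := hg'.comp hd
  have key : ∀ v, pd v (pd v (q * g ∘ d)) p = pd v (pd v q) p * g (d p) +
      deriv g (d p) * (2 * (pd v q p * pd v d p) + q p * pd v (pd v d) p) +
      deriv (deriv g) (d p) * (q p * pd v d p ^ 2) := fun v => by
    have hqv := contDiff_pd hq v
    have hdv := contDiff_pd hd v
    have hgdv : ContDiff ℝ (⊤ : ℕ∞) (deriv g ∘ d * pd v d) := hgd'.mul hdv
    rw [pd_mul hq hgd, pd_comp hg hd,
      pd_add (u := pd v q * g ∘ d) (hqv.mul hgd) (w := q * (deriv g ∘ d * pd v d)) (hq.mul hgdv),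
      pd_mul hqv hgd, pd_mul hq hgdv, pd_mul hgd' hdv, pd_comp hg hd, pd_comp hg' hd]
    simp only [Pi.add_apply, Pi.mul_apply, Function.comp_apply]
    ring
  simp only [lap, uxx, uyy, key]
  ring

theorem pd_eventuallyEq {p : ℝ × ℝ} (h : u =ᶠ[nhds p] w) (v : ℝ × ℝ) :
    pd v u =ᶠ[nhds p] pd v w := by
  filter_upwards [h.fderiv (𝕜 := ℝ)] with x hx
  rw [pd, pd, hx]

theorem lap_eq_of_eventuallyEq {p : ℝ × ℝ} (h : u =ᶠ[nhds p] w) : lap u p = lap w p := by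
  rw [lap, lap, uxx, uxx, uyy, uyy, (pd_eventuallyEq (pd_eventuallyEq h _) _).eq_of_nhds,
    (pd_eventuallyEq (pd_eventuallyEq h _) _).eq_of_nhds]

end ProductRule

section Approximation

variable {Ω : Set (ℝ × ℝ)} {d q : ℝ × ℝ → ℝ} {r : ℝ}

/-- The approximation of `q * d ^ 2` by functions supported away from the complement of `Ω`, for a
function `d` that vanishes on the frontier of `Ω`. -/
def truncation (Ω : Set (ℝ × ℝ)) (q d : ℝ × ℝ → ℝ) (r : ℝ) : ℝ × ℝ → ℝ :=
  Ω.indicator (q * sqCutoff r ∘ d)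

theorem truncation_eventuallyEq (hΩ : IsOpen Ω) (q d : ℝ × ℝ → ℝ) (r : ℝ) {p : ℝ × ℝ} (hp : p ∈ Ω) :
    truncation Ω q d r =ᶠ[nhds p] q * sqCutoff r ∘ d := by
  filter_upwards [hΩ.mem_nhds hp] with x hx using Set.indicator_of_mem hx _

theorem tsupport_truncation_subset (hd : Continuous d) (r : ℝ) :
    tsupport (truncation Ω q d r) ⊆ closure Ω ∩ {p | 1 ≤ r * d p} := by
  refine closure_minimal (fun p hp => ?_)
    (isClosed_closure.inter (isClosed_le continuous_const (continuous_const.mul hd)))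
  have hpΩ := Set.mem_of_indicator_ne_zero hp
  refine ⟨subset_closure hpΩ, ?_⟩
  by_contra! h
  exact hp (by simp [truncation, hpΩ, sqCutoff_of_mul_le (le_of_lt (not_le.1 h))])

theorem adm_truncation (hΩ : IsOpen Ω) (hb : Bornology.IsBounded Ω) (hq : ContDiff ℝ (⊤ : ℕ∞) q)
    (hd : ContDiff ℝ (⊤ : ℕ∞) d) (hd0 : ∀ p ∈ frontier Ω, d p = 0) (r : ℝ) :
    Adm Ω (truncation Ω q d r) := by
  have hsupp := tsupport_truncation_subset (Ω := Ω) (q := q) hd.continuous r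
  have hsub : tsupport (truncation Ω q d r) ⊆ Ω := fun p hp => by
    by_contra hpΩ
    have : 1 ≤ r * d p := (hsupp hp).2
    rw [hd0 p (hΩ.frontier_eq ▸ ⟨(hsupp hp).1, hpΩ⟩)] at this
    linarith
  refine ⟨(contMDiff_of_tsupport fun p hp => ContDiffAt.contMDiffAt ?_).contDiff, ?_, hsub⟩
  · exact (hq.mul ((contDiff_sqCutoff r).comp hd)).contDiffAt.congr_of_eventuallyEq
      (truncation_eventuallyEq hΩ q d r (hsub hp))
  · exact hb.isCompact_closure.of_isClosed_subset isClosed_closure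
      (hsupp.trans Set.inter_subset_left)

theorem eventually_truncation_eventuallyEq (hΩ : IsOpen Ω) (hd : Continuous d) {p : ℝ × ℝ}
    (hp : p ∈ Ω) (hdp : 0 < d p) :
    ∀ᶠ r in atTop, truncation Ω q d r =ᶠ[nhds p] q * d ^ 2 := by
  filter_upwards [eventually_gt_atTop (2 / d p)] with r hr
  have h := (sqCutoff_eventuallyEq_sq ((div_lt_iff₀ hdp).1 hr)).comp_tendsto hd.continuousAt
  filter_upwards [truncation_eventuallyEq hΩ q d r hp, h] with x hx hdx
  simpa [hx] using Or.inl hdx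

theorem tendsto_integral_truncation_sq (hΩ : IsOpen Ω) (hb : Bornology.IsBounded Ω)
    (hq : ContDiff ℝ (⊤ : ℕ∞) q) (hd : ContDiff ℝ (⊤ : ℕ∞) d) (hd0 : ∀ p ∈ frontier Ω, d p = 0)
    (hdpos : ∀ p ∈ Ω, 0 < d p) :
    Tendsto (fun r => ∫ p in Ω, truncation Ω q d r p ^ 2) atTop
      (nhds (∫ p in Ω, (q * d ^ 2) p ^ 2)) := by
  have cq := hq.continuous
  have cd := hd.continuous
  refine tendsto_integral_filter_of_dominated_convergence (fun p => (q p * d p ^ 2) ^ 2)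
    (.of_forall fun r =>
      ((adm_truncation hΩ hb hq hd hd0 r).1.continuous.pow 2).aestronglyMeasurable)
    (.of_forall fun r => ?_) (integrableOn_of_isBounded (by fun_prop) hb) ?_
  · filter_upwards [ae_restrict_mem hΩ.measurableSet] with p hp
    rw [norm_pow, norm_eq_abs, ← sq_abs (q p * _), (truncation_eventuallyEq hΩ q d r hp).eq_of_nhds]
    simp only [Pi.mul_apply, Function.comp_apply, abs_mul, abs_pow, sq_abs]
    gcongr
    exact abs_sqCutoff_le r _
  · filter_upwards [ae_restrict_mem hΩ.measurableSet] with p hp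
    refine tendsto_nhds_of_eventually_eq ?_
    filter_upwards [eventually_truncation_eventuallyEq hΩ cd hp (hdpos p hp)] with r hr
    rw [hr.eq_of_nhds]

theorem tendsto_integral_lap_truncation_sq (hΩ : IsOpen Ω) (hb : Bornology.IsBounded Ω)
    (hq : ContDiff ℝ (⊤ : ℕ∞) q) (hd : ContDiff ℝ (⊤ : ℕ∞) d) (hd0 : ∀ p ∈ frontier Ω, d p = 0)
    (hdpos : ∀ p ∈ Ω, 0 < d p) :
    Tendsto (fun r => ∫ p in Ω, lap (truncation Ω q d r) p ^ 2) atTop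
      (nhds (∫ p in Ω, lap (q * d ^ 2) p ^ 2)) := by
  obtain ⟨C, hC⟩ := exists_forall_abs_deriv_sqCutoff_le
  have cq := hq.continuous
  have cd := hd.continuous
  have cq' := fun v => (contDiff_pd hq v).continuous
  have cd' := fun v => (contDiff_pd hd v).continuous
  have clq := continuous_lap hq
  have cld := continuous_lap hd
  refine tendsto_integral_filter_of_dominated_convergence (fun p => (|lap q p| * d p ^ 2 +
      C * |d p| * |2 * (pd (1, 0) q p * pd (1, 0) d p + pd (0, 1) q p * pd (0, 1) d p) +
        q p * lap d p| +
      C * |q p * (pd (1, 0) d p ^ 2 + pd (0, 1) d p ^ 2)|) ^ 2)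
    (.of_forall fun r => ((continuous_lap
      (adm_truncation hΩ hb hq hd hd0 r).1).pow 2).aestronglyMeasurable)
    ?_ (integrableOn_of_isBounded (by fun_prop) hb) ?_
  · filter_upwards [eventually_ne_atTop 0] with r hr
    filter_upwards [ae_restrict_mem hΩ.measurableSet] with p hp
    rw [norm_pow, norm_eq_abs, lap_eq_of_eventuallyEq (truncation_eventuallyEq hΩ q d r hp),
      lap_mul_comp hq (contDiff_sqCutoff r) hd]
    refine pow_le_pow_left₀ (abs_nonneg _) ((abs_add_three _ _ _).trans ?_) 2
    simp only [abs_mul (lap q p), abs_mul (deriv _ _)]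
    gcongr
    exacts [abs_sqCutoff_le r _, (hC r hr _).1, (hC r hr _).2]
  · filter_upwards [ae_restrict_mem hΩ.measurableSet] with p hp
    refine tendsto_nhds_of_eventually_eq ?_
    filter_upwards [eventually_truncation_eventuallyEq hΩ cd hp (hdpos p hp)] with r hr
    rw [lap_eq_of_eventuallyEq hr]

theorem lam1_le_of_mul_sq {a : ℝ} (hq : ContDiff ℝ (⊤ : ℕ∞) q) (hd : ContDiff ℝ (⊤ : ℕ∞) d)
    (hd0 : ∀ p ∈ frontier (Rect a), d p = 0) (hdpos : ∀ p ∈ Rect a, 0 < d p)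
    (hpos : 0 < ∫ p in Rect a, (q * d ^ 2) p ^ 2) :
    lam1 a ≤ (∫ p in Rect a, lap (q * d ^ 2) p ^ 2) / ∫ p in Rect a, (q * d ^ 2) p ^ 2 := by
  have hΩ := isOpen_Rect a
  have hb := isBounded_Rect a
  have hv := tendsto_integral_truncation_sq hΩ hb hq hd hd0 hdpos
  refine ge_of_tendsto
    ((tendsto_integral_lap_truncation_sq hΩ hb hq hd hd0 hdpos).div hv hpos.ne') ?_
  filter_upwards [hv.eventually_const_lt hpos] with r hr
  have hadm := adm_truncation hΩ hb hq hd hd0 r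
  rw [Pi.div_apply, hadm.setIntegral_sq, hadm.setIntegral_lap_sq]
  exact lam1_le hadm fun h => by simp [h] at hr

theorem mul_sq_mem_clamped (hq : ContDiff ℝ (⊤ : ℕ∞) q) (hd : ContDiff ℝ (⊤ : ℕ∞) d)
    (hd0 : ∀ p ∈ frontier Ω, d p = 0) : q * d ^ 2 ∈ clamped Ω := by
  refine ⟨hq.mul (hd.pow 2), fun p hp => ⟨by simp [hd0 p hp], ?_⟩⟩
  have hq' := hq.differentiable (by simp) p
  have hd' := hd.differentiable (by simp) p
  rw [fderiv_mul hq' (hd'.pow 2), fderiv_pow 2 hd']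
  simp [hd0 p hp]

end Approximation

section EvenMonomial

variable {f g : ℝ → ℝ}

theorem pd_fst_mul (hf : Differentiable ℝ f) (hg : Differentiable ℝ g) :
    pd (1, 0) (fun p : ℝ × ℝ => f p.1 * g p.2) = fun p => deriv f p.1 * g p.2 := by
  funext p
  have hfp := (hf p.1).hasDerivAt.comp_hasFDerivAt p (hasFDerivAt_fst (𝕜 := ℝ) (F := ℝ))
  have hgp := (hg p.2).hasDerivAt.comp_hasFDerivAt p (hasFDerivAt_snd (𝕜 := ℝ) (E := ℝ))
  rw [pd, HasFDerivAt.fderiv (f := fun p : ℝ × ℝ => f p.1 * g p.2) (hfp.mul hgp)]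
  simp [mul_comm]

theorem pd_snd_mul (hf : Differentiable ℝ f) (hg : Differentiable ℝ g) :
    pd (0, 1) (fun p : ℝ × ℝ => f p.1 * g p.2) = fun p => f p.1 * deriv g p.2 := by
  funext p
  have hfp := (hf p.1).hasDerivAt.comp_hasFDerivAt p (hasFDerivAt_fst (𝕜 := ℝ) (F := ℝ))
  have hgp := (hg p.2).hasDerivAt.comp_hasFDerivAt p (hasFDerivAt_snd (𝕜 := ℝ) (E := ℝ))
  rw [pd, HasFDerivAt.fderiv (f := fun p : ℝ × ℝ => f p.1 * g p.2) (hfp.mul hgp)]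
  simp

theorem lap_fst_mul_snd (hf : ContDiff ℝ (⊤ : ℕ∞) f) (hg : ContDiff ℝ (⊤ : ℕ∞) g) :
    lap (fun p : ℝ × ℝ => f p.1 * g p.2) =
      fun p => deriv (deriv f) p.1 * g p.2 + f p.1 * deriv (deriv g) p.2 := by
  have hf0 := hf.differentiable (by simp)
  have hg0 := hg.differentiable (by simp)
  have hf1 : Differentiable ℝ (deriv f) := (hf.iterate_deriv 1).differentiable (by simp)
  have hg1 : Differentiable ℝ (deriv g) := (hg.iterate_deriv 1).differentiable (by simp)
  funext p
  rw [lap, uxx, uyy, pd_fst_mul hf0 hg0, pd_snd_mul hf0 hg0, pd_fst_mul hf1 hg0,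
    pd_snd_mul hf0 hg1]

theorem deriv_two_mul_sub_one_pow (n : ℕ) :
    deriv (fun t : ℝ => (2 * t - 1) ^ n) = fun t : ℝ => 2 * n * (2 * t - 1) ^ (n - 1) := by
  funext t
  have h : HasDerivAt (fun t : ℝ => 2 * t - 1) 2 t := by
    simpa using ((hasDerivAt_id t).const_mul 2).sub_const 1
  rw [(h.fun_pow n).deriv]
  ring

theorem deriv_deriv_two_mul_sub_one_pow_even (i : ℕ) (t : ℝ) :
    deriv (deriv fun t : ℝ => (2 * t - 1) ^ (2 * i)) t =
      8 * i * (2 * i - 1) * (2 * t - 1) ^ (2 * (i - 1)) := by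
  rw [deriv_two_mul_sub_one_pow, deriv_const_mul_field, deriv_two_mul_sub_one_pow]
  rcases i with - | i
  · simp
  · rw [show 2 * (i + 1) - 1 - 1 = 2 * (i + 1 - 1) by omega]
    push_cast [show 2 * (i + 1) - 1 = 2 * i + 1 by omega]
    ring

theorem integral_two_mul_sub_one_pow_even (i : ℕ) :
    ∫ t in (0 : ℝ)..1, (2 * t - 1) ^ (2 * i) = 1 / (2 * i + 1) := by
  rw [intervalIntegral.integral_comp_mul_sub (fun t => t ^ (2 * i)) two_ne_zero, integral_pow]
  have : Odd (2 * i + 1) := odd_two_mul_add_one i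
  simp only [mul_one, mul_zero, zero_sub, this.neg_one_pow, sub_neg_eq_add, Nat.cast_mul,
    Nat.cast_ofNat, smul_eq_mul]
  ring

/-- The monomials in `(2x - 1)²` and `(2y - 1)²`, which span the polynomials that are even about
both axes of symmetry of the unit square. -/
def evenMonomial (i j : ℕ) : ℝ × ℝ → ℝ :=
  fun p => (2 * p.1 - 1) ^ (2 * i) * (2 * p.2 - 1) ^ (2 * j)

theorem contDiff_evenMonomial (i j : ℕ) : ContDiff ℝ (⊤ : ℕ∞) (evenMonomial i j) := by
  unfold evenMonomial
  fun_prop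

theorem evenMonomial_mul (i j i' j' : ℕ) :
    evenMonomial i j * evenMonomial i' j' = evenMonomial (i + i') (j + j') := by
  funext p
  simp only [evenMonomial, Pi.mul_apply]
  ring

theorem lap_evenMonomial (i j : ℕ) : lap (evenMonomial i j) =
    (8 * i * (2 * i - 1) : ℝ) • evenMonomial (i - 1) j +
      (8 * j * (2 * j - 1) : ℝ) • evenMonomial i (j - 1) := by
  unfold evenMonomial
  rw [lap_fst_mul_snd (f := fun t => (2 * t - 1) ^ (2 * i)) (g := fun t => (2 * t - 1) ^ (2 * j))
    (by fun_prop) (by fun_prop)]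
  funext p
  simp only [deriv_deriv_two_mul_sub_one_pow_even, Pi.add_apply, Pi.smul_apply, smul_eq_mul]
  ring

theorem integral_evenMonomial (i j : ℕ) :
    ∫ p in Rect 1, evenMonomial i j p = 1 / (2 * i + 1) * (1 / (2 * j + 1)) := by
  rw [integral_Rect_eq_fst one_pos (contDiff_evenMonomial i j).continuous, div_one]
  simp only [evenMonomial, intervalIntegral.integral_const_mul, intervalIntegral.integral_mul_const,
    integral_two_mul_sub_one_pow_even]

end EvenMonomial

/-- Integer combinations of the functions `evenMonomial i j`, as lists of terms `(i, j, c)` with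
`c` the coefficient, possibly with repeated exponents. -/
abbrev EvenPoly : Type := List (ℕ × ℕ × ℤ)

namespace EvenPoly

/-- The function represented by a list of terms. -/
def eval (l : EvenPoly) : ℝ × ℝ → ℝ :=
  (l.map fun t => (t.2.2 : ℝ) • evenMonomial t.1 t.2.1).sum

@[simp] theorem eval_nil : eval [] = 0 := rfl

@[simp] theorem eval_cons (t : ℕ × ℕ × ℤ) (l : EvenPoly) :
    eval (t :: l) = (t.2.2 : ℝ) • evenMonomial t.1 t.2.1 + eval l := List.sum_cons

@[simp] theorem eval_append (l m : EvenPoly) : eval (l ++ m) = eval l + eval m := by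
  simp [eval]

theorem contDiff_const_smul_evenMonomial (t : ℕ × ℕ × ℤ) :
    ContDiff ℝ (⊤ : ℕ∞) ((t.2.2 : ℝ) • evenMonomial t.1 t.2.1) :=
  contDiff_const.smul (contDiff_evenMonomial _ _)

theorem contDiff_eval (l : EvenPoly) : ContDiff ℝ (⊤ : ℕ∞) (eval l) := by
  induction l with
  | nil => exact contDiff_const
  | cons t l ih =>
    rw [eval_cons]
    exact (contDiff_const_smul_evenMonomial t).add ih

/-- The Laplacian on lists of terms. At exponent `0` the truncated subtraction does no harm, as the
coefficient vanishes. -/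
def laplacian (l : EvenPoly) : EvenPoly := l.flatMap fun (i, j, c) =>
  [(i - 1, j, 8 * i * (2 * i - 1) * c), (i, j - 1, 8 * j * (2 * j - 1) * c)]

theorem lap_eval (l : EvenPoly) : lap (eval l) = eval (laplacian l) := by
  induction l with
  | nil =>
    have h := lap_const_smul (contDiff_const (c := (0 : ℝ))) 0
    simpa [laplacian] using h
  | cons t l ih =>
    have ht := contDiff_evenMonomial t.1 t.2.1
    rw [eval_cons, lap_add (contDiff_const_smul_evenMonomial t) (contDiff_eval l),
      lap_const_smul ht, lap_evenMonomial, ih,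
      show laplacian (t :: l) = _ ++ laplacian l from List.flatMap_cons, eval_append]
    simp only [eval_cons, eval_nil]
    push_cast
    module

/-- Multiplication of a list of terms by a single term. -/
def termMul (s : ℕ × ℕ × ℤ) (l : EvenPoly) : EvenPoly :=
  l.map fun t => (s.1 + t.1, s.2.1 + t.2.1, s.2.2 * t.2.2)

theorem eval_termMul (s : ℕ × ℕ × ℤ) (l : EvenPoly) :
    eval (termMul s l) = (s.2.2 : ℝ) • (evenMonomial s.1 s.2.1 * eval l) := by
  induction l with
  | nil => simp [termMul]
  | cons t l ih =>
    rw [termMul, List.map_cons, eval_cons, ← termMul, ih, eval_cons, ← evenMonomial_mul, mul_add,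
      mul_smul_comm]
    push_cast
    module

/-- Multiplication of lists of terms, without collecting equal exponents. -/
def mul (l m : EvenPoly) : EvenPoly := l.flatMap fun s => termMul s m

theorem eval_mul (l m : EvenPoly) : eval (mul l m) = eval l * eval m := by
  induction l with
  | nil => simp [mul]
  | cons s l ih =>
    rw [mul, List.flatMap_cons, eval_append, eval_termMul, ← mul, ih, eval_cons, add_mul,
      smul_mul_assoc]

/-- Adds a term to a list of terms with distinct exponents, dropping it if the resulting coefficient
vanishes. -/
def insertTerm (t : ℕ × ℕ × ℤ) : EvenPoly → EvenPoly
  | [] => if t.2.2 = 0 then [] else [t]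
  | s :: l =>
    if s.1 = t.1 ∧ s.2.1 = t.2.1 then
      if s.2.2 + t.2.2 = 0 then l else (s.1, s.2.1, s.2.2 + t.2.2) :: l
    else s :: insertTerm t l

theorem eval_insertTerm (t : ℕ × ℕ × ℤ) (l : EvenPoly) :
    eval (insertTerm t l) = (t.2.2 : ℝ) • evenMonomial t.1 t.2.1 + eval l := by
  induction l with
  | nil => by_cases h : t.2.2 = 0 <;> simp [insertTerm, h]
  | cons s l ih =>
    rw [insertTerm]
    split_ifs with hexp hzero
    · rw [eval_cons, ← hexp.1, ← hexp.2, ← add_assoc, ← add_smul, ← Int.cast_add, add_comm t.2.2,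
        hzero, Int.cast_zero, zero_smul, zero_add]
    · rw [eval_cons, eval_cons, ← hexp.1, ← hexp.2]
      push_cast
      module
    · rw [eval_cons, eval_cons, ih, add_left_comm]

/-- Collects the terms with equal exponents. -/
def collect (l : EvenPoly) : EvenPoly := l.foldr insertTerm []

theorem eval_collect (l : EvenPoly) : eval (collect l) = eval l := by
  induction l with
  | nil => rfl
  | cons t l ih => rw [collect, List.foldr_cons, eval_insertTerm, ← collect, ih, eval_cons]

theorem eval_eq_of_collect_eq_nil {l m : EvenPoly} (h : collect (l ++ termMul (0, 0, -1) m) = []) :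
    eval l = eval m := by
  have h0 := eval_collect (l ++ termMul (0, 0, -1) m)
  rw [h, eval_append, eval_termMul] at h0
  funext p
  have hp := congrFun h0 p
  simp only [eval_nil, Pi.zero_apply, Int.cast_neg, Int.cast_one, neg_smul, one_smul, Pi.add_apply,
    Pi.neg_apply, Pi.mul_apply, evenMonomial, mul_zero, pow_zero, mul_one, one_mul] at hp
  linarith

/-- The integral over the unit square times `D ^ 2`, computed in integers for a common multiple `D`
of the denominators `2 * i + 1` and `2 * j + 1`. -/
def moment (D : ℕ) (l : EvenPoly) : ℤ :=
  (l.map fun t => t.2.2 * ((D / (2 * t.1 + 1) * (D / (2 * t.2.1 + 1)) : ℕ) : ℤ)).sum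

theorem sq_mul_integral_eval {D : ℕ} {l : EvenPoly}
    (hl : ∀ t ∈ l, 2 * t.1 + 1 ∣ D ∧ 2 * t.2.1 + 1 ∣ D) :
    (D : ℝ) ^ 2 * ∫ p in Rect 1, eval l p = moment D l := by
  induction l with
  | nil => simp [moment]
  | cons t l ih =>
    obtain ⟨⟨hi, hj⟩, hl⟩ := List.forall_mem_cons.1 hl
    simp only [eval_cons, Pi.add_apply, Pi.smul_apply, smul_eq_mul]
    rw [integral_Rect_add (continuous_const.fun_mul (contDiff_evenMonomial _ _).continuous)
      (contDiff_eval l).continuous, integral_const_mul, integral_evenMonomial, mul_add, ih hl,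
      moment, moment, List.map_cons, List.sum_cons]
    have hD {i : ℕ} (h : 2 * i + 1 ∣ D) : ((D / (2 * i + 1) : ℕ) : ℝ) = D / (2 * i + 1) := by
      rw [Nat.cast_div h (by positivity)]
      push_cast
      rfl
    rw [Int.cast_add, Int.cast_mul, Int.cast_natCast, Nat.cast_mul, hD hi, hD hj]
    ring

/-- The moment of `mul l m`, as a nested sum because the kernel cannot evaluate the sum over such a
long list. -/
def gram (D : ℕ) (l m : EvenPoly) : ℤ := (l.map fun s => moment D (termMul s m)).sum

theorem moment_mul (D : ℕ) (l m : EvenPoly) : moment D (mul l m) = gram D l m := by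
  induction l with
  | nil => rfl
  | cons s l ih =>
    rw [gram, List.map_cons, List.sum_cons, ← gram, ← ih]
    simp only [moment, mul, List.flatMap_cons, List.map_append, List.sum_append]

theorem sq_mul_integral_eval_sq {D N : ℕ} {l : EvenPoly} (hD : ∀ k ≤ 2 * N, 2 * k + 1 ∣ D)
    (hl : ∀ t ∈ l, t.1 ≤ N ∧ t.2.1 ≤ N) :
    (D : ℝ) ^ 2 * ∫ p in Rect 1, eval l p ^ 2 = gram D l l := by
  rw [← moment_mul, ← sq_mul_integral_eval, eval_mul]
  · simp only [Pi.mul_apply, sq]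
  · simp only [mul, termMul, List.mem_flatMap, List.mem_map]
    rintro _ ⟨s, hs, t, ht, rfl⟩
    have hs' := hl s hs
    have ht' := hl t ht
    exact ⟨hD _ (by dsimp only; omega), hD _ (by dsimp only; omega)⟩

end EvenPoly

section UnitSquare

open EvenPoly

/-- A polynomial vanishing on the boundary of the unit square and positive inside, whose square
turns any smooth cofactor into a clamped function. -/
def bubble : EvenPoly := [(0, 0, 1), (1, 0, -1), (0, 1, -1), (1, 1, 1)]

theorem eval_bubble (p : ℝ × ℝ) :
    eval bubble p = (1 - (2 * p.1 - 1) ^ 2) * (1 - (2 * p.2 - 1) ^ 2) := by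
  simp only [bubble, eval_cons, Int.cast_one, one_smul, Int.cast_neg, neg_smul, eval_nil, add_zero,
    Pi.add_apply, evenMonomial, mul_zero, pow_zero, mul_one, Pi.neg_apply, one_mul]
  ring

theorem eval_bubble_eq_zero_of_mem_frontier {p : ℝ × ℝ} (hp : p ∈ frontier (Rect 1)) :
    eval bubble p = 0 := by
  rw [frontier_Rect one_pos, div_one] at hp
  rcases hp with ⟨-, h | h⟩ | ⟨h | h, -⟩ <;> rw [eval_bubble, h] <;> norm_num

theorem eval_bubble_pos {p : ℝ × ℝ} (hp : p ∈ Rect 1) : 0 < eval bubble p := by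
  rw [Rect, div_one] at hp
  have one_sub_sq_pos {t : ℝ} (ht : t ∈ Set.Ioo 0 1) : 0 < 1 - (2 * t - 1) ^ 2 := by
    linear_combination 4 * mul_pos ht.1 (sub_pos.2 ht.2)
  rw [eval_bubble]
  exact mul_pos (one_sub_sq_pos hp.1) (one_sub_sq_pos hp.2)

/-- The cofactor of `bubble ^ 2` in the trial function, up to a constant: a rounded numerical
Rayleigh–Ritz approximation. -/
def trialFactor : EvenPoly :=
  [(0, 0, -499020), (0, 1, 1002), (0, 2, -19608), (0, 3, -2938), (0, 4, 219), (0, 5, -498),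
   (0, 6, 350), (1, 0, 1002), (1, 1, 75272), (1, 2, 42844), (1, 3, 10456), (1, 4, -69267),
   (1, 5, 100954), (1, 6, -57341), (2, 0, -19608), (2, 1, 42844), (2, 2, 158926), (2, 3, -316581),
   (2, 4, 1389010), (2, 5, -2340295), (2, 6, 1349824), (3, 0, -2938), (3, 1, 10456),
   (3, 2, -316581), (3, 3, 3302819), (3, 4, -11501925), (3, 5, 18718073), (3, 6, -10817021),
   (4, 0, 219), (4, 1, -69267), (4, 2, 1389010), (4, 3, -11501925), (4, 4, 42193748),
   (4, 5, -67580928), (4, 6, 38662534), (5, 0, -498), (5, 1, 100954), (5, 2, -2340295),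
   (5, 3, 18718073), (5, 4, -67580928), (5, 5, 109326286), (5, 6, -62885897), (6, 0, 350),
   (6, 1, -57341), (6, 2, 1349824), (6, 3, -10817021), (6, 4, 38662534), (6, 5, -62885897),
   (6, 6, 37076035)]

/-- The trial function, close to a first eigenfunction. The scalar makes the coefficients of
`potential` integral. -/
def trial : EvenPoly :=
  collect (mul (termMul (0, 0, 73719457787711736000) trialFactor) (mul bubble bubble))

/-- The Laplacian of the trial function. -/
def trialLap : EvenPoly := collect (laplacian trial)

/-- A function with Laplacian `trial`. Its harmonic part is fitted numerically to make its `L²`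
norm small, since this improves Lehmann's bound. -/
def potential : EvenPoly :=
  [(0, 0, 909981802648465856103196), (0, 1, -2299217739076494406170000),
   (0, 2, 681416859500163183860940), (0, 3, -221300078543104920559200),
   (0, 4, -17187463702752208040332), (0, 5, -2593090703808687422340),
   (0, 6, 838199594440095587110), (0, 7, -55188275553326111625), (0, 8, -185171134080872117683),
   (0, 9, 3835129057360300700), (0, 10, 4548122279588420328), (0, 11, -33760577612279700),
   (0, 12, -7677823492820177308), (0, 13, 54171686029860630), (0, 15, 5883026024506631),
   (0, 17, 506593965627750), (1, 0, -2299217739076494406170000), (1, 1, 5117603161392909416448360),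
   (1, 2, -1478087415219918258756000), (1, 3, 824781656967798514889296),
   (1, 4, -7832297464277652065700), (1, 5, -91019820666745716907260),
   (1, 6, 19443502005073784512875), (1, 7, 11181047285994821655960),
   (1, 8, 2638451532436262442900), (1, 9, -864143233121799862320), (1, 10, 7798693428436610700),
   (1, 11, 2119079284018368937008), (1, 12, -17605797959704704750), (1, 14, -2559116320660384485),
   (1, 16, -284199214717167750), (2, 0, 681416859500163183860940),
   (2, 1, -1478087415219918258756000), (2, 2, -626627084360525323336240),
   (2, 3, -77898736715460093833400), (2, 4, 651457645246204592503950),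
   (2, 5, 181890530365667801052375), (2, 6, -678928452534743261729060),
   (2, 7, 282089319775657359966000), (2, 8, -67104994419072788285340),
   (2, 9, -246958625233826005500), (2, 10, -81584552434707204074808),
   (2, 11, 809866706146416418500), (2, 13, 161224328201604222555), (2, 15, 23493801749952534000),
   (3, 0, -221300078543104920559200), (3, 1, 824781656967798514889296),
   (3, 2, -77898736715460093833400), (3, 3, -1556631408488512919418240),
   (3, 4, 844096842049161707881875), (3, 5, -661003540069268004144536),
   (3, 6, 3251219194342253227493400), (3, 7, -2825021037567625563208680),
   (3, 8, 902422228453020548172900), (3, 9, 1033404330839624584947568),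
   (3, 10, -12471947274654812844900), (3, 12, -3493193777701424822025),
   (3, 14, -681320250748623486000), (4, 0, -17187463702752208040332),
   (4, 1, -7832297464277652065700), (4, 2, 651457645246204592503950),
   (4, 3, 844096842049161707881875), (4, 4, -6452343151231662017936460),
   (4, 5, 10813824738041966643202200), (4, 6, -15476015701314546746105790),
   (4, 7, 12800852672115836336258250), (4, 8, -10114087313181595864094568),
   (4, 9, 84631070792300515733250), (4, 11, 34432910094485473245675),
   (4, 13, 9197823385106417061000), (5, 0, -2593090703808687422340),
   (5, 1, -91019820666745716907260), (5, 2, 181890530365667801052375),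
   (5, 3, -661003540069268004144536), (5, 4, 10813824738041966643202200),
   (5, 5, -30329627564304865122376908), (5, 6, 44341392053715437517086250),
   (5, 7, -20260782157415961117090552), (5, 8, 12335974310873935919146950),
   (5, 10, -176755605151692095994465), (5, 12, -66428724447990789885000),
   (6, 0, 838199594440095587110), (6, 1, 19443502005073784512875),
   (6, 2, -678928452534743261729060), (6, 3, 3251219194342253227493400),
   (6, 4, -15476015701314546746105790), (6, 5, 44341392053715437517086250),
   (6, 6, -89472795895930045124992648), (6, 7, 56492967036168824118457500),
   (6, 8, -21086555376307043630007000), (6, 9, 508841893618507549074975),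
   (6, 11, 277792847691597848610000), (7, 0, -55188275553326111625),
   (7, 1, 11181047285994821655960), (7, 2, 282089319775657359966000),
   (7, 3, -2825021037567625563208680), (7, 4, 12800852672115836336258250),
   (7, 5, -20260782157415961117090552), (7, 6, 56492967036168824118457500),
   (7, 7, -48357512206989081207111000), (7, 8, 19550016787329554423973075),
   (7, 10, -705166459524825308010000), (8, 0, -185171134080872117683),
   (8, 1, 2638451532436262442900), (8, 2, -67104994419072788285340),
   (8, 3, 902422228453020548172900), (8, 4, -10114087313181595864094568),
   (8, 5, 12335974310873935919146950), (8, 6, -21086555376307043630007000),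
   (8, 7, 19550016787329554423973075), (8, 8, -10523296482885764461959075),
   (8, 9, 1116513560914306737682500), (9, 0, 3835129057360300700), (9, 1, -864143233121799862320),
   (9, 2, -246958625233826005500), (9, 3, 1033404330839624584947568),
   (9, 4, 84631070792300515733250), (9, 6, 508841893618507549074975),
   (9, 8, 1116513560914306737682500), (10, 0, 4548122279588420328), (10, 1, 7798693428436610700),
   (10, 2, -81584552434707204074808), (10, 3, -12471947274654812844900),
   (10, 5, -176755605151692095994465), (10, 7, -705166459524825308010000),
   (11, 0, -33760577612279700), (11, 1, 2119079284018368937008), (11, 2, 809866706146416418500),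
   (11, 4, 34432910094485473245675), (11, 6, 277792847691597848610000),
   (12, 0, -7677823492820177308), (12, 1, -17605797959704704750), (12, 3, -3493193777701424822025),
   (12, 5, -66428724447990789885000), (13, 0, 54171686029860630), (13, 2, 161224328201604222555),
   (13, 4, 9197823385106417061000), (14, 1, -2559116320660384485), (14, 3, -681320250748623486000),
   (15, 0, 5883026024506631), (15, 2, 23493801749952534000), (16, 1, -284199214717167750),
   (17, 0, 506593965627750)]

theorem eval_trial :
    eval trial = eval (termMul (0, 0, 73719457787711736000) trialFactor) * eval bubble ^ 2 := by
  rw [trial, eval_collect, eval_mul, eval_mul, sq]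

theorem eval_trial_mem_clamped : eval trial ∈ clamped (Rect 1) := by
  rw [eval_trial]
  exact mul_sq_mem_clamped (contDiff_eval _) (contDiff_eval _)
    fun _ => eval_bubble_eq_zero_of_mem_frontier

theorem lap_eval_trial : lap (eval trial) = eval trialLap := by
  rw [lap_eval, trialLap, eval_collect]

theorem lap_eval_potential : lap (eval potential) = eval trial := by
  rw [lap_eval]
  exact eval_eq_of_collect_eq_nil (by decide +kernel)

/-- A common denominator for the moments of degree at most `34 = 2 * 17` in `(2x - 1)²` and
`(2y - 1)²`. -/
def momentDenom : ℕ := Nat.doubleFactorial 69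

theorem momentDenom_pos : 0 < momentDenom := Nat.doubleFactorial_pos 69

theorem sq_momentDenom_mul_integral_eval_sq {l : EvenPoly} (hl : ∀ t ∈ l, t.1 ≤ 17 ∧ t.2.1 ≤ 17) :
    (momentDenom : ℝ) ^ 2 * ∫ p in Rect 1, eval l p ^ 2 = gram momentDenom l l :=
  sq_mul_integral_eval_sq (N := 17) (by decide +kernel) hl

theorem sq_momentDenom_mul_integral_trial_sq :
    (momentDenom : ℝ) ^ 2 * ∫ p in Rect 1, eval trial p ^ 2 = gram momentDenom trial trial :=
  sq_momentDenom_mul_integral_eval_sq (by decide +kernel)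

theorem sq_momentDenom_mul_integral_lap_trial_sq :
    (momentDenom : ℝ) ^ 2 * ∫ p in Rect 1, lap (eval trial) p ^ 2 =
      gram momentDenom trialLap trialLap := by
  rw [lap_eval_trial]
  exact sq_momentDenom_mul_integral_eval_sq (by decide +kernel)

theorem sq_momentDenom_mul_integral_potential_sq :
    (momentDenom : ℝ) ^ 2 * ∫ p in Rect 1, eval potential p ^ 2 =
      gram momentDenom potential potential :=
  sq_momentDenom_mul_integral_eval_sq (by decide +kernel)

-- A single evaluation, so that the kernel shares the Gram values between the two inequalities.
theorem gram_inequalities :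
    1000000 * gram momentDenom trialLap trialLap < 1294933988 * gram momentDenom trial trial ∧
      129493394 * (1558 * gram momentDenom potential potential - gram momentDenom trial trial) ≤
        100000 * (1558 * gram momentDenom trial trial - gram momentDenom trialLap trialLap) := by
  decide +kernel

theorem integral_lap_trial_sq_lt :
    ∫ p in Rect 1, lap (eval trial) p ^ 2 < 1294.933988 * ∫ p in Rect 1, eval trial p ^ 2 := by
  have hgram := gram_inequalities.1
  rify at hgram
  rw [← sq_momentDenom_mul_integral_trial_sq,
    ← sq_momentDenom_mul_integral_lap_trial_sq] at hgram
  refine lt_of_mul_lt_mul_left (a := (momentDenom : ℝ) ^ 2) ?_ (sq_nonneg _)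
  linarith

theorem lehmann_inequality_trial :
    1294.933940 * (1558 * (∫ p in Rect 1, eval potential p ^ 2) -
        ∫ p in Rect 1, eval trial p ^ 2) ≤
      1558 * (∫ p in Rect 1, eval trial p ^ 2) - ∫ p in Rect 1, lap (eval trial) p ^ 2 := by
  have hgram := gram_inequalities.2
  have hpos : (0 : ℝ) < momentDenom ^ 2 := pow_pos (Nat.cast_pos.2 momentDenom_pos) 2
  rify at hgram
  rw [← sq_momentDenom_mul_integral_trial_sq, ← sq_momentDenom_mul_integral_lap_trial_sq,
    ← sq_momentDenom_mul_integral_potential_sq] at hgram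
  refine le_of_mul_le_mul_left ?_ hpos
  linarith

theorem integral_trial_sq_pos : 0 < ∫ p in Rect 1, eval trial p ^ 2 := by
  have hlap : 0 ≤ ∫ p in Rect 1, lap (eval trial) p ^ 2 := integral_nonneg fun _ => sq_nonneg _
  linarith [integral_lap_trial_sq_lt]

theorem lt_two_pi_pow_four : 1558 < (2 * π) ^ 4 :=
  calc (1558 : ℝ) < (2 * 3.1415) ^ 4 := by norm_num
    _ < (2 * π) ^ 4 := by gcongr; exact pi_gt_d4

end UnitSquare

/-- The first Dirichlet biharmonic eigenvalue of the unit square satisfies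
`1294.933940 ≤ λ₁(1) ≤ 1294.933988`. -/
theorem first_eigenvalue_unit_square_bounds :
    1294.933940 ≤ lam1 1 ∧ lam1 1 ≤ 1294.933988 := by
  constructor
  · refine le_lam1 one_pos fun w hw => ?_
    have hρ : 1558 ≤ (2 * π / 1) ^ 4 := by rw [div_one]; exact lt_two_pi_pow_four.le
    refine mul_integral_sq_le_integral_lap_sq le_rfl (by norm_num) (by norm_num) hρ
      eval_trial_mem_clamped (EvenPoly.contDiff_eval _) lap_eval_potential ?_
      lehmann_inequality_trial hw
    linarith [integral_lap_trial_sq_lt, integral_trial_sq_pos]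
  · have hupper := integral_lap_trial_sq_lt.le
    have hpos := integral_trial_sq_pos
    rw [← div_le_iff₀ hpos] at hupper
    rw [eval_trial] at hpos hupper
    exact (lam1_le_of_mul_sq (EvenPoly.contDiff_eval _) (EvenPoly.contDiff_eval _)
      (fun _ => eval_bubble_eq_zero_of_mem_frontier) (fun _ => eval_bubble_pos) hpos).trans hupper
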